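/- Let T be a finite tree and let T1 and T2 each be obtained from T by a single grafting operation. If T1 and T2 are not isomorphic as graphs, then their Tutte-like polynomials are distinct: f(T1;t,z) ≠ f(T2;t,z). In particular, two non-isomorphic trees at the same level of a poset that have the same parent tree have distinct Tutte-like polynomials. -/

import Mathlib

/-!
Substituting `t = X - 1` and `t (z + 1) = X - π` in the Tutte-like polynomial, with `X` and `π`
independent variables, gives every leaf edge of a subtree the weight `X - 1` and every other edge
the weight `X - π`. For a rooted tree, the weighted number of subtrees containing the root is the
product over the branches, and a branch whose upper part contributes `q` contributes
`π + (X - π) q`, which is irreducible by Eisenstein's criterion at `π`. Unique factorization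
therefore recovers the rooted tree from this product.

Moving the leaf `l` from `m` to the next vertex `v` only affects the subtrees through the moved
edge. If `Z` is the product for the part of the tree hanging from `v` off the path `v`, `m`, `l`,
the polynomial increases by `(X - 1) π (Z - 1)`. So the polynomials of the old and the new tree
determine `Z`, hence also `X ^ 2 Z`, which is the product for the new tree rooted at `v`.
-/

open SimpleGraph

/-- `Grafts G G'` : `G'` is obtained from `G` by one grafting operation. -/
def Grafts {V : Type*} (G G' : SimpleGraph V) : Prop :=
  ∃ n1 n2 v : V, G.Adj n1 n2 ∧ (G.neighborSet n2).ncard = 1 ∧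
    (G.neighborSet n1).ncard = 2 ∧ G.Adj n1 v ∧ v ≠ n2 ∧
    G' = G.deleteEdges {s(n1, n2)} ⊔ fromEdgeSet {s(v, n2)}

/-- `IsSubtree G F`: the finite edge set `F` consists of edges of `G` and its
edge-induced subgraph is connected. -/
def IsSubtree {V : Type*} (G : SimpleGraph V) (F : Finset (Sym2 V)) : Prop :=
  (F : Set (Sym2 V)) ⊆ G.edgeSet ∧
    ∀ u v : V, u ∈ (fromEdgeSet (F : Set (Sym2 V))).support →
      v ∈ (fromEdgeSet (F : Set (Sym2 V))).support →
      (fromEdgeSet (F : Set (Sym2 V))).Reachable u v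

/-- `leafCount F`: the number of leaf edges of the edge set `F`, i.e. edges of `F`
incident to a vertex of degree 1 in the subgraph formed by `F`. -/
noncomputable def leafCount {V : Type*} (F : Finset (Sym2 V)) : ℕ :=
  {e : Sym2 V | e ∈ F ∧ ∃ u ∈ e,
    ((fromEdgeSet (F : Set (Sym2 V))).neighborSet u).ncard = 1}.ncard

/-- The Tutte-like polynomial `f(T;t,z) = Σ_F t^{|F|}·(z+1)^{|F|−L(F)}`, the sum running
over all subtrees `F` of `T` (connected edge subsets, including `∅`), viewed as an
element of `ℤ[z][t]` (outer variable `t`, inner variable `z`). -/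
noncomputable def tutteLike {V : Type*} [Fintype V] (G : SimpleGraph V) :
    Polynomial (Polynomial ℤ) :=
  letI := Classical.decEq V
  letI : DecidableRel G.Adj := Classical.decRel _
  letI := Classical.decPred (IsSubtree G)
  ∑ F ∈ G.edgeFinset.powerset.filter (IsSubtree G),
    Polynomial.C ((Polynomial.X + 1) ^ (F.card - leafCount F)) * Polynomial.X ^ F.card

namespace TutteLike

section Eisenstein

open Polynomial

variable {A : Type*} [CommRing A] {π : A} {q : A[X]}

/-- If `q` is the closed sum of the forest above the root of a rooted tree, this is the closed sum
of that tree (inner vertices weighing `X - C π`, leaves weighing `X - 1`). -/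
noncomputable def planted (π : A) (q : A[X]) : A[X] := C π + (X - C π) * q

lemma isDistinguishedAt_one (I : Ideal A) : (1 : A[X]).IsDistinguishedAt I :=
  ⟨⟨fun h => by simp at h⟩, monic_one⟩

lemma isDistinguishedAt_X_sub_C [Nontrivial A] {I : Ideal A} (hπ : π ∈ I) :
    (X - C π).IsDistinguishedAt I := by
  refine ⟨⟨fun {n} h => ?_⟩, monic_X_sub_C π⟩
  obtain rfl : n = 0 := by simpa using h
  simpa using hπ

lemma isDistinguishedAt_C_add {I : Ideal A} (hπ : π ∈ I) (hq : q.IsDistinguishedAt I)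
    (hdeg : 0 < q.natDegree) : (C π + q).IsDistinguishedAt I := by
  have hlt : (C π).degree < q.degree :=
    degree_C_le.trans_lt (natDegree_pos_iff_degree_pos.1 hdeg)
  refine ⟨⟨fun {n} h => ?_⟩, hq.monic.add_of_right hlt⟩
  rw [natDegree_C_add] at h
  rw [coeff_add, coeff_C]
  split_ifs
  · exact I.add_mem hπ (hq.mem h)
  · exact I.add_mem I.zero_mem (hq.mem h)

lemma natDegree_X_sub_C_mul [Nontrivial A] (hq : q.Monic) :
    ((X - C π) * q).natDegree = q.natDegree + 1 := by
  rw [(monic_X_sub_C π).natDegree_mul hq, natDegree_X_sub_C, add_comm]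

lemma isDistinguishedAt_planted [Nontrivial A] (hq : q.IsDistinguishedAt (Ideal.span {π})) :
    (planted π q).IsDistinguishedAt (Ideal.span {π}) := by
  have hπ := Ideal.mem_span_singleton_self π
  refine isDistinguishedAt_C_add hπ ((isDistinguishedAt_X_sub_C hπ).mul hq) ?_
  rw [natDegree_X_sub_C_mul hq.monic]
  exact q.natDegree.succ_pos

/-- For `q ≠ 1` the constant coefficient `π * (1 - q.coeff 0)` is not divisible by `π ^ 2`, so
Eisenstein's criterion applies; for `q = 1` the polynomial is `X`. -/
lemma irreducible_planted [IsDomain A] (hπ : Prime π)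
    (hq : q.IsDistinguishedAt (Ideal.span {π})) : Irreducible (planted π q) := by
  have hplanted := isDistinguishedAt_planted hq
  have hprime : (Ideal.span {π}).IsPrime := (Ideal.span_singleton_prime hπ.ne_zero).2 hπ
  have hdeg : (planted π q).natDegree = q.natDegree + 1 := by
    rw [planted, natDegree_C_add, natDegree_X_sub_C_mul hq.monic]
  obtain hq0 | hq0 := q.natDegree.eq_zero_or_pos
  · rw [planted, hq.monic.natDegree_eq_zero.1 hq0, mul_one, add_sub_cancel]
    exact irreducible_X
  have hcoeff : (planted π q).coeff 0 = π * (1 - q.coeff 0) := by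
    simp only [planted, coeff_add, coeff_C_zero, mul_coeff_zero, coeff_sub, coeff_X_zero]
    ring
  have hunit : ¬ π ∣ 1 - q.coeff 0 := fun hdvd =>
    hπ.not_dvd_one <| (dvd_sub_left (Ideal.mem_span_singleton.1 (hq.mem hq0))).1 hdvd
  refine (hplanted.monic.isEisensteinAt_of_mem_of_notMem hprime.ne_top (fun h => hplanted.mem h)
    ?_).irreducible hprime hplanted.monic.isPrimitive (by omega)
  rwa [hcoeff, Ideal.span_singleton_pow, Ideal.mem_span_singleton, sq,
    mul_dvd_mul_iff_left hπ.ne_zero]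

end Eisenstein

section ClosedSum

variable {V R : Type*} [DecidableEq V] [CommRing R] {a b : R} {par par' : V → V}
  {U W S S' : Finset V} {x : V}

/-- The subsets of `U` containing with each element its parent, as long as the parent is in `U`.
If `U` consists of the non-root vertices of a rooted tree, these are the subtrees containing the
root: each vertex stands for the edge towards its parent. -/
def closedSubsets (par : V → V) (U : Finset V) : Finset (Finset V) :=
  {S ∈ U.powerset | ∀ x ∈ S, par x ∈ U → par x ∈ S}

/-- The product over `S` giving weight `a` to the vertices having a child in `S`, and weight `b` to
the others, which are the upper ends of the leaf edges. -/
def closedWeight (a b : R) (par : V → V) (S : Finset V) : R :=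
  ∏ x ∈ S, if x ∈ S.image par then a else b

/-- The generating function of the subtrees containing the root of a rooted tree or, more generally,
of the closed subsets of a rooted forest. -/
def closedSum (a b : R) (par : V → V) (U : Finset V) : R :=
  ∑ S ∈ closedSubsets par U, closedWeight a b par S

lemma mem_closedSubsets :
    S ∈ closedSubsets par U ↔ S ⊆ U ∧ ∀ x ∈ S, par x ∈ U → par x ∈ S := by
  rw [closedSubsets, Finset.mem_filter, Finset.mem_powerset]

lemma closedWeight_congr (h : ∀ x ∈ S, par x = par' x) :
    closedWeight a b par S = closedWeight a b par' S := by
  rw [closedWeight, closedWeight, Finset.image_congr h]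

lemma closedSum_congr (h : ∀ x ∈ U, par x = par' x) :
    closedSum a b par U = closedSum a b par' U := by
  have hclosed : closedSubsets par U = closedSubsets par' U :=
    Finset.filter_congr fun S hS => forall₂_congr fun x hx => by
      rw [h x (Finset.mem_powerset.1 hS hx)]
  rw [closedSum, closedSum, hclosed]
  exact Finset.sum_congr rfl fun S hS =>
    closedWeight_congr fun x hx => h x ((mem_closedSubsets.1 hS).1 hx)

lemma closedWeight_empty : closedWeight a b par ∅ = 1 := Finset.prod_empty

lemma closedSum_empty : closedSum a b par ∅ = 1 := by
  simp [closedSum, closedSubsets, closedWeight_empty]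

lemma closedWeight_union (hdisj : Disjoint S S') (hS : ∀ x ∈ S, par x ∉ S')
    (hS' : ∀ x ∈ S', par x ∉ S) :
    closedWeight a b par (S ∪ S') = closedWeight a b par S * closedWeight a b par S' := by
  rw [closedWeight, Finset.prod_union hdisj]
  congr 1 <;> refine Finset.prod_congr rfl fun x hx => ?_
  · have : x ∉ S'.image par := by grind
    simp only [Finset.image_union, Finset.mem_union, this, or_false]
  · have : x ∉ S.image par := by grind
    simp only [Finset.image_union, Finset.mem_union, this, false_or]

lemma closedSum_union (hdisj : Disjoint U W) (hU : ∀ x ∈ U, par x ∉ W) (hW : ∀ x ∈ W, par x ∉ U) :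
    closedSum a b par (U ∪ W) = closedSum a b par U * closedSum a b par W := by
  rw [closedSum, closedSum, closedSum, Finset.sum_mul_sum, ← Finset.sum_product']
  have hdisj' := Finset.disjoint_left.1 hdisj
  refine Finset.sum_bij' (fun S _ => (S ∩ U, S ∩ W)) (fun S _ => S.1 ∪ S.2) ?_ ?_ ?_ ?_ ?_
  · intro S hS
    simp only [Finset.mem_product, mem_closedSubsets] at hS ⊢
    grind
  · rintro ⟨S, S'⟩ hS
    simp only [Finset.mem_product, mem_closedSubsets] at hS ⊢
    grind
  · intro S hS
    rw [← Finset.inter_union_distrib_left]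
    exact Finset.inter_eq_left.2 (mem_closedSubsets.1 hS).1
  · rintro ⟨S, S'⟩ hS
    simp only [Finset.mem_product, mem_closedSubsets] at hS
    ext x <;> grind
  · intro S hS
    rw [← closedWeight_union (hdisj.mono Finset.inter_subset_right Finset.inter_subset_right)
      (by grind) (by grind), ← Finset.inter_union_distrib_left,
      Finset.inter_eq_left.2 (mem_closedSubsets.1 hS).1]

omit [DecidableEq V] in
lemma exists_par_notMem {d : V → ℕ} (hd : ∀ x ∈ S, d (par x) < d x) (hS : S.Nonempty) :
    ∃ x ∈ S, par x ∉ S := by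
  obtain ⟨x, hx, hmin⟩ := S.exists_min_image d hS
  exact ⟨x, hx, fun hpar => (hd x hx).not_ge (hmin _ hpar)⟩

omit [DecidableEq V] in
lemma exists_par_eq_root {d : V → ℕ} (hd : ∀ y ∈ U, d (par y) < d y)
    (hU : ∀ y ∈ U, par y = x ∨ par y ∈ U) (hSU : S ⊆ U) (hS : ∀ y ∈ S, par y ∈ U → par y ∈ S)
    (hne : S.Nonempty) : ∃ y ∈ S, par y = x := by
  obtain ⟨y, hy, hpar⟩ := exists_par_notMem (fun y hy => hd y (hSU hy)) hne
  exact ⟨y, hy, (hU y (hSU hy)).resolve_right fun h => hpar (hS y hy h)⟩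

lemma closedSubsets_insert_root {d : V → ℕ} (hd : ∀ y ∈ U, d (par y) < d y)
    (hx : par x ∉ insert x U) (hU : ∀ y ∈ U, par y = x ∨ par y ∈ U) :
    closedSubsets par (insert x U) = insert ∅ ((closedSubsets par U).image (insert x)) := by
  ext S
  rw [Finset.mem_insert, Finset.mem_image, mem_closedSubsets]
  constructor
  · rintro ⟨hSU, hS⟩
    obtain rfl | hne := S.eq_empty_or_nonempty
    · exact Or.inl rfl
    have hxS : x ∈ S := by
      by_contra hxS
      obtain ⟨y, hy, rfl⟩ := exists_par_eq_root hd hU (S := S) (by grind) (by grind) hne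
      exact hxS (hS y hy (Finset.mem_insert_self _ _))
    exact Or.inr ⟨S.erase x, mem_closedSubsets.2 ⟨by grind, by grind⟩, Finset.insert_erase hxS⟩
  · rintro (rfl | ⟨S, hS, rfl⟩)
    · simp
    · rw [mem_closedSubsets] at hS
      grind

lemma closedWeight_insert_root (hxS : x ∉ S) (hx : par x ∉ S) (hxx : par x ≠ x) :
    closedWeight a b par (insert x S) =
      (if x ∈ S.image par then a else b) * closedWeight a b par S := by
  rw [closedWeight, Finset.prod_insert hxS]
  congr 1
  · simp only [Finset.image_insert, Finset.mem_insert, hxx.symm, false_or]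
  · refine Finset.prod_congr rfl fun y hy => ?_
    have hyx : y ≠ par x := by grind
    simp only [Finset.image_insert, Finset.mem_insert, hyx, false_or]

/-- In a closed set `insert x S`, the root `x` is a leaf only if `S = ∅`. -/
lemma closedSum_insert_root {d : V → ℕ} (hd : ∀ y ∈ U, d (par y) < d y) (hxU : x ∉ U)
    (hx : par x ∉ insert x U) (hU : ∀ y ∈ U, par y = x ∨ par y ∈ U) :
    closedSum a b par (insert x U) = 1 + b + a * (closedSum a b par U - 1) := by
  have hempty : ∅ ∈ closedSubsets par U := by simp [mem_closedSubsets]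
  have hsubset : ∀ S ∈ closedSubsets par U, S ⊆ U := fun S hS => (mem_closedSubsets.1 hS).1
  have hinj : Set.InjOn (insert x) (closedSubsets par U : Set (Finset V)) := fun S hS S' hS' h => by
    rw [← Finset.erase_insert fun hx => hxU (hsubset S hS hx), h,
      Finset.erase_insert fun hx => hxU (hsubset S' hS' hx)]
  have hinsert : ∀ S ∈ closedSubsets par U, closedWeight a b par (insert x S) =
      (if x ∈ S.image par then a else b) * closedWeight a b par S := fun S hS =>
    closedWeight_insert_root (fun h => hxU (hsubset S hS h)) (by grind) (by grind)
  have hinner : ∀ S ∈ (closedSubsets par U).erase ∅,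
      (if x ∈ S.image par then a else b) * closedWeight a b par S = a * closedWeight a b par S := by
    intro S hS
    obtain ⟨hne, hS⟩ := Finset.mem_erase.1 hS
    rw [if_pos (Finset.mem_image.2 (exists_par_eq_root hd hU (hsubset S hS)
      (mem_closedSubsets.1 hS).2 (Finset.nonempty_iff_ne_empty.2 hne)))]
  rw [closedSum, closedSubsets_insert_root hd hx hU, Finset.sum_insert (by simp),
    closedWeight_empty, Finset.sum_image hinj, Finset.sum_congr rfl hinsert,
    ← Finset.add_sum_erase _ _ hempty, Finset.sum_congr rfl hinner, ← Finset.mul_sum,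
    closedSum, ← Finset.add_sum_erase _ _ hempty, closedWeight_empty]
  simp only [Finset.image_empty, Finset.notMem_empty, if_false]
  ring

lemma closedSum_singleton (hx : par x ≠ x) : closedSum a b par {x} = 1 + b := by
  have := closedSum_insert_root (a := a) (b := b) (par := par) (U := ∅) (x := x) (d := 0)
  simpa [closedSum_empty, hx] using this

lemma sum_closedWeight_of_leaf (hx : x ∈ U) (hroot : par x ∉ U) (hleaf : ∀ y ∈ U, par y ≠ x) :
    ∑ S ∈ closedSubsets par U with x ∈ S, closedWeight a b par S =
      b * closedSum a b par (U.erase x) := by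
  rw [closedSum, Finset.mul_sum]
  symm
  refine Finset.sum_bij' (fun S _ => insert x S) (fun S _ => S.erase x) ?_ ?_ ?_ ?_ ?_
  · intro S hS
    rw [mem_closedSubsets] at hS
    rw [Finset.mem_filter, mem_closedSubsets]
    grind
  · intro S hS
    rw [Finset.mem_filter, mem_closedSubsets] at hS
    rw [mem_closedSubsets]
    grind
  · intro S hS
    rw [mem_closedSubsets] at hS
    grind
  · intro S hS
    exact Finset.insert_erase (Finset.mem_filter.1 hS).2
  · intro S hS
    rw [mem_closedSubsets] at hS
    rw [closedWeight_insert_root (by grind) (by grind) (by grind), if_neg (by grind)]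

end ClosedSum

section Forest

variable {V W : Type*} {par : V → V} {par' : W → W} {x y : V}

/-- `U` carries a rooted forest in which the parent of a vertex `y` is `par y`, the roots being the
elements of `U` with parent outside `U`. The value of `par` at a root is irrelevant, and no vertex
outside `U` has its parent in `U`. -/
structure IsForest (par : V → V) (U : Finset V) : Prop where
  exists_depth : ∃ d : V → ℕ, ∀ y ∈ U, d (par y) < d y
  mem_of_par_mem : ∀ y, par y ∈ U → y ∈ U

/-- An isomorphism of rooted forests: a bijection of the vertices that respects parents and maps
roots to roots. -/
structure IsForestIso (par : V → V) (par' : W → W) (U : Finset V) (U' : Finset W) (φ : V → W) :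
    Prop where
  bijOn : Set.BijOn φ U U'
  par_apply : ∀ y ∈ U, par y ∈ U → par' (φ y) = φ (par y)
  par_apply_notMem : ∀ y ∈ U, par y ∉ U → par' (φ y) ∉ U'

variable [Fintype V] [DecidableEq V] [Fintype W] [DecidableEq W] {U : Finset V} {U' : Finset W}

open Classical in
/-- The vertices of the subtree hanging from `x`, including `x`. -/
noncomputable def descendants (par : V → V) (x : V) : Finset V := {y | ∃ k, par^[k] y = x}

omit [DecidableEq V] in
lemma mem_descendants : y ∈ descendants par x ↔ ∃ k, par^[k] y = x := by
  simp [descendants]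

omit [DecidableEq V] in
lemma self_mem_descendants : x ∈ descendants par x := mem_descendants.2 ⟨0, rfl⟩

omit [DecidableEq V] in
lemma mem_descendants_of_par_mem (h : par y ∈ descendants par x) : y ∈ descendants par x := by
  obtain ⟨k, hk⟩ := mem_descendants.1 h
  exact mem_descendants.2 ⟨k + 1, hk⟩

omit [DecidableEq V] in
lemma eq_or_par_mem_descendants (h : y ∈ descendants par x) :
    y = x ∨ par y ∈ descendants par x := by
  obtain ⟨_ | k, hk⟩ := mem_descendants.1 h
  · exact Or.inl hk
  · exact Or.inr (mem_descendants.2 ⟨k, hk⟩)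

namespace IsForest

omit [DecidableEq V] in
lemma descendants_subset (hU : IsForest par U) (hx : x ∈ U) : descendants par x ⊆ U := by
  intro y hy
  obtain ⟨k, hk⟩ := mem_descendants.1 hy
  clear hy
  induction k generalizing y with
  | zero => rwa [← show y = x from hk] at hx
  | succ k ih => exact hU.mem_of_par_mem y (ih hk)

lemma erase_descendants (hU : IsForest par U) (hx : x ∈ U) (hroot : par x ∉ U) :
    IsForest par ((descendants par x).erase x) where
  exists_depth := hU.exists_depth.imp fun _ hd y hy =>
    hd y (hU.descendants_subset hx (Finset.mem_of_mem_erase hy))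
  mem_of_par_mem y hy := by
    have hpar := Finset.mem_of_mem_erase hy
    refine Finset.mem_erase.2 ⟨?_, mem_descendants_of_par_mem hpar⟩
    rintro rfl
    exact hroot (hU.descendants_subset hx hpar)

lemma sdiff_descendants (hU : IsForest par U) (hroot : par x ∉ U) :
    IsForest par (U \ descendants par x) where
  exists_depth := hU.exists_depth.imp fun _ hd y hy => hd y (Finset.mem_sdiff.1 hy).1
  mem_of_par_mem y hy := by
    rw [Finset.mem_sdiff] at hy ⊢
    refine ⟨hU.mem_of_par_mem y hy.1, fun hdesc => ?_⟩
    obtain rfl | hdesc := eq_or_par_mem_descendants hdesc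
    exacts [hroot hy.1, hy.2 hdesc]

/-- Induction removing a whole tree: its root `x`, the forest hanging from `x`, and the other trees
of the forest are treated separately. -/
lemma induction {motive : ∀ U : Finset V, IsForest par U → Prop}
    (empty : ∀ h : IsForest par ∅, motive ∅ h)
    (step : ∀ U x (hU : IsForest par U) (hx : x ∈ U) (hroot : par x ∉ U),
      motive _ (hU.erase_descendants hx hroot) → motive _ (hU.sdiff_descendants hroot) →
        motive U hU) (hU : IsForest par U) : motive U hU := by
  induction U using Finset.strongInduction with
  | H U ih =>
    obtain rfl | hne := U.eq_empty_or_nonempty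
    · exact empty hU
    obtain ⟨d, hd⟩ := hU.exists_depth
    obtain ⟨x, hx, hroot⟩ := exists_par_notMem hd hne
    have hsub := hU.descendants_subset hx
    refine step U x hU hx hroot (ih _ ?_ _) (ih _ ?_ _)
    · exact (Finset.erase_ssubset self_mem_descendants).trans_subset hsub
    · exact Finset.sdiff_ssubset hsub ⟨x, self_mem_descendants⟩

section closedSum

variable {R : Type*} [CommRing R] {a b : R}

lemma closedSum_eq_mul (hU : IsForest par U) (hx : x ∈ U) (hroot : par x ∉ U) :
    closedSum a b par U =
      closedSum a b par (descendants par x) * closedSum a b par (U \ descendants par x) := by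
  conv_lhs => rw [← Finset.union_sdiff_of_subset (hU.descendants_subset hx)]
  refine closedSum_union Finset.disjoint_sdiff (fun y hy hpar => ?_) fun y hy hpar => ?_
  · rw [Finset.mem_sdiff] at hpar
    obtain rfl | hdesc := eq_or_par_mem_descendants hy
    exacts [hroot hpar.1, hpar.2 hdesc]
  · exact (Finset.mem_sdiff.1 hy).2 (mem_descendants_of_par_mem hpar)

lemma closedSum_descendants (hU : IsForest par U) (hx : x ∈ U) (hroot : par x ∉ U) :
    closedSum a b par (descendants par x) =
      1 + b + a * (closedSum a b par ((descendants par x).erase x) - 1) := by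
  obtain ⟨d, hd⟩ := (hU.erase_descendants hx hroot).exists_depth
  have hins := Finset.insert_erase (self_mem_descendants (par := par) (x := x))
  conv_lhs => rw [← hins]
  refine closedSum_insert_root hd (Finset.notMem_erase _ _) ?_ fun y hy => ?_
  · rw [hins]
    exact fun h => hroot (hU.descendants_subset hx h)
  · obtain ⟨hyx, hy⟩ := Finset.mem_erase.1 hy
    have := (eq_or_par_mem_descendants hy).resolve_left hyx
    grind

end closedSum

/-- Sends `x` to `x'`, and uses `φ` on the rest of `D` and `ψ` outside `D`. -/
def glue (D : Finset V) (x : V) (x' : W) (φ ψ : V → W) (y : V) : W :=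
  if y = x then x' else if y ∈ D then φ y else ψ y

omit [Fintype V] [Fintype W] in
lemma bijOn_glue {D : Finset V} {D' : Finset W} {x' : W} {φ ψ : V → W} (hD : D ⊆ U)
    (hD' : D' ⊆ U') (hx : x ∈ D) (hx' : x' ∈ D') (hφ : Set.BijOn φ (D.erase x) (D'.erase x'))
    (hψ : Set.BijOn ψ ↑(U \ D) ↑(U' \ D')) : Set.BijOn (glue D x x' φ ψ) U U' := by
  have hφmaps : ∀ y ∈ D.erase x, φ y ∈ D'.erase x' := hφ.mapsTo
  have hψmaps : ∀ y ∈ U \ D, ψ y ∈ U' \ D' := hψ.mapsTo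
  refine ⟨fun y hy => ?_, fun y hy z hz hyz => ?_, fun z hz => ?_⟩
  · grind [glue]
  · have := hφ.injOn.eq_iff (x := y) (y := z)
    have := hψ.injOn.eq_iff (x := y) (y := z)
    grind [glue]
  · obtain rfl | hzx := eq_or_ne z x'
    · exact ⟨x, hD hx, if_pos rfl⟩
    by_cases hzD : z ∈ D'
    · obtain ⟨y, hy, rfl⟩ := hφ.surjOn (by simp [hzx, hzD] : z ∈ _)
      exact ⟨y, by grind [glue]⟩
    · obtain ⟨y, hy, rfl⟩ := hψ.surjOn (Finset.mem_coe.2 (Finset.mem_sdiff.2 ⟨hz, hzD⟩))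
      exact ⟨y, by grind [glue]⟩

lemma isForestIso_glue {x' : W} {φ ψ : V → W} (hU : IsForest par U) (hU' : IsForest par' U')
    (hx : x ∈ U) (hroot : par x ∉ U) (hx' : x' ∈ U') (hroot' : par' x' ∉ U')
    (hφ : IsForestIso par par' ((descendants par x).erase x) ((descendants par' x').erase x') φ)
    (hψ : IsForestIso par par' (U \ descendants par x) (U' \ descendants par' x') ψ) :
    IsForestIso par par' U U' (glue (descendants par x) x x' φ ψ) := by
  have hsub := hU.descendants_subset hx
  have hsub' := hU'.descendants_subset hx'
  have hself := self_mem_descendants (par := par) (x := x)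
  have hself' := self_mem_descendants (par := par') (x := x')
  have hmem := fun y => mem_descendants_of_par_mem (par := par) (x := x) (y := y)
  have hmem' := fun y => mem_descendants_of_par_mem (par := par') (x := x') (y := y)
  have hpar := fun y => eq_or_par_mem_descendants (par := par) (x := x) (y := y)
  have hpar' := fun y => eq_or_par_mem_descendants (par := par') (x := x') (y := y)
  refine ⟨bijOn_glue hsub hsub' hself hself' hφ.bijOn hψ.bijOn, fun y hy hyU => ?_,
    fun y hy hyU => ?_⟩
  · have := hφ.par_apply y
    have := hφ.par_apply_notMem y
    have hφy : y ∈ (descendants par x).erase x → φ y ∈ _ := hφ.bijOn.mapsTo (x := y)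
    have := hψ.par_apply y
    grind [glue]
  · have := hψ.par_apply_notMem y
    have hψy : y ∈ U \ descendants par x → ψ y ∈ _ := hψ.bijOn.mapsTo (x := y)
    grind [glue]

section Reconstruction

open Polynomial

variable {A : Type*} [CommRing A] {π : A}

lemma closedSum_descendants_eq_planted (hU : IsForest par U) (hx : x ∈ U) (hroot : par x ∉ U) :
    closedSum (X - C π) (X - 1) par (descendants par x) =
      planted π (closedSum (X - C π) (X - 1) par ((descendants par x).erase x)) := by
  rw [hU.closedSum_descendants hx hroot, planted]
  ring

omit [Fintype V] in
lemma isDistinguishedAt_closedSum [Finite V] [Nontrivial A] (hU : IsForest par U) :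
    (closedSum (X - C π) (X - 1) par U).IsDistinguishedAt (Ideal.span {π}) := by
  have := Fintype.ofFinite V
  induction hU using IsForest.induction with
  | empty =>
    rw [closedSum_empty]
    exact isDistinguishedAt_one _
  | step U x hU hx hroot ihbranch ihrest =>
    rw [hU.closedSum_eq_mul hx hroot, hU.closedSum_descendants_eq_planted hx hroot]
    exact (isDistinguishedAt_planted ihbranch).mul ihrest

lemma monic_closedSum_descendants [Nontrivial A] (hU : IsForest par U) (hx : x ∈ U)
    (hroot : par x ∉ U) : (closedSum (X - C π) (X - 1) par (descendants par x)).Monic := by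
  rw [hU.closedSum_descendants_eq_planted hx hroot]
  exact (isDistinguishedAt_planted
    (hU.erase_descendants hx hroot).isDistinguishedAt_closedSum).monic

lemma exists_dvd_of_prime_dvd_closedSum {p : A[X]} (hp : Prime p) (hU : IsForest par U)
    (hdvd : p ∣ closedSum (X - C π) (X - 1) par U) :
    ∃ x ∈ U, par x ∉ U ∧ p ∣ closedSum (X - C π) (X - 1) par (descendants par x) := by
  induction hU using IsForest.induction with
  | empty =>
    rw [closedSum_empty] at hdvd
    exact absurd hdvd hp.not_dvd_one
  | step U x hU hx hroot _ ih =>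
    rw [hU.closedSum_eq_mul hx hroot] at hdvd
    obtain hdvd | hdvd := hp.dvd_or_dvd hdvd
    · exact ⟨x, hx, hroot, hdvd⟩
    obtain ⟨y, hy, hpar, hdvd⟩ := ih hdvd
    rw [Finset.mem_sdiff] at hy hpar
    exact ⟨y, hy.1, fun h => hpar ⟨h, fun hdesc => hy.2 (mem_descendants_of_par_mem hdesc)⟩, hdvd⟩

variable [IsDomain A]

lemma irreducible_closedSum_descendants (hπ : Prime π) (hU : IsForest par U) (hx : x ∈ U)
    (hroot : par x ∉ U) : Irreducible (closedSum (X - C π) (X - 1) par (descendants par x)) := by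
  rw [hU.closedSum_descendants_eq_planted hx hroot]
  exact irreducible_planted hπ (hU.erase_descendants hx hroot).isDistinguishedAt_closedSum

/-- The prime factor contributed by a tree of `U` divides, hence equals, the one contributed by some
tree of `U'`. -/
lemma exists_closedSum_descendants_eq [UniqueFactorizationMonoid A] (hπ : Prime π)
    (hU : IsForest par U) (hU' : IsForest par' U') (hx : x ∈ U) (hroot : par x ∉ U)
    (heq : closedSum (X - C π) (X - 1) par U = closedSum (X - C π) (X - 1) par' U') :
    ∃ x' ∈ U', par' x' ∉ U' ∧ closedSum (X - C π) (X - 1) par (descendants par x) =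
      closedSum (X - C π) (X - 1) par' (descendants par' x') := by
  have hirr := hU.irreducible_closedSum_descendants hπ hx hroot
  obtain ⟨x', hx', hroot', hdvd⟩ := hU'.exists_dvd_of_prime_dvd_closedSum hirr.prime
    ((Dvd.intro _ (hU.closedSum_eq_mul hx hroot).symm).trans heq.dvd)
  have hirr' := hU'.irreducible_closedSum_descendants hπ hx' hroot'
  refine ⟨x', hx', hroot', eq_of_monic_of_associated ?_ ?_ (hirr.associated_of_dvd hirr' hdvd)⟩
  exacts [hU.monic_closedSum_descendants hx hroot, hU'.monic_closedSum_descendants hx' hroot']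

omit [Fintype V] [Fintype W] in
theorem exists_isForestIso [Finite V] [Finite W] [Nonempty W] [UniqueFactorizationMonoid A]
    (hπ : Prime π) (hU : IsForest par U) (hU' : IsForest par' U')
    (heq : closedSum (X - C π) (X - 1) par U = closedSum (X - C π) (X - 1) par' U') :
    ∃ φ, IsForestIso par par' U U' φ := by
  have := Fintype.ofFinite V
  have := Fintype.ofFinite W
  induction hU using IsForest.induction generalizing U' with
  | empty =>
    obtain rfl : U' = ∅ := by
      by_contra hne
      obtain ⟨d, hd⟩ := hU'.exists_depth
      obtain ⟨x', hx', hroot'⟩ := exists_par_notMem hd (Finset.nonempty_iff_ne_empty.2 hne)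
      refine (hU'.irreducible_closedSum_descendants hπ hx' hroot').not_dvd_one ?_
      rw [closedSum_empty] at heq
      exact (Dvd.intro _ (hU'.closedSum_eq_mul hx' hroot').symm).trans heq.symm.dvd
    exact ⟨fun _ => Classical.arbitrary W, by simp, by simp, by simp⟩
  | step U x hU hx hroot ihbranch ihrest =>
    obtain ⟨x', hx', hroot', htree⟩ := hU.exists_closedSum_descendants_eq hπ hU' hx hroot heq
    have hrest : closedSum (X - C π) (X - 1) par (U \ descendants par x) =
        closedSum (X - C π) (X - 1) par' (U' \ descendants par' x') := by
      rw [hU.closedSum_eq_mul hx hroot, hU'.closedSum_eq_mul hx' hroot', htree] at heq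
      exact mul_left_cancel₀
        (hU'.irreducible_closedSum_descendants hπ hx' hroot').ne_zero heq
    have hbranch : closedSum (X - C π) (X - 1) par ((descendants par x).erase x) =
        closedSum (X - C π) (X - 1) par' ((descendants par' x').erase x') := by
      rw [hU.closedSum_descendants_eq_planted hx hroot,
        hU'.closedSum_descendants_eq_planted hx' hroot', planted, planted, add_right_inj] at htree
      exact mul_left_cancel₀ (X_sub_C_ne_zero π) htree
    obtain ⟨φ, hφ⟩ := ihbranch (hU'.erase_descendants hx' hroot') hbranch
    obtain ⟨ψ, hψ⟩ := ihrest (hU'.sdiff_descendants hroot') hrest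
    exact ⟨_, isForestIso_glue hU hU' hx hroot hx' hroot' hφ hψ⟩

end Reconstruction
end IsForest
end Forest

section ParentMap

variable {V W : Type*} {G : SimpleGraph V} {r c l x y : V} {par : V → V}

/-- `G` is the tree rooted at `r` in which `par x` is the neighbour of `x` on the way to `r`; the
root is its own parent. -/
structure IsParentMap (G : SimpleGraph V) (r : V) (par : V → V) : Prop where
  par_root : par r = r
  exists_depth : ∃ d : V → ℕ, ∀ x, x ≠ r → d (par x) < d x
  adj_iff : ∀ x y, G.Adj x y ↔ x ≠ y ∧ (par x = y ∨ par y = x)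

lemma exists_isParentMap (hG : G.IsTree) (r : V) : ∃ par, IsParentMap G r par := by
  choose p hp hdist using fun x => (hG.connected x r).exists_path_of_dist
  have hadj : ∀ x, x ≠ r → G.Adj x (p x).snd := fun x hx => (p x).adj_snd (Walk.not_nil_of_ne hx)
  have hroot : (p r).snd = r := by
    rw [(Walk.isPath_iff_nil.1 (hp r)).eq_nil]
    rfl
  refine ⟨fun x => (p x).snd, hroot, ⟨fun x => G.dist x r, fun x hx => ?_⟩, fun x y => ?_⟩
  · change G.dist (p x).snd r < G.dist x r
    rw [← hdist x, ← Walk.length_tail_add_one (Walk.not_nil_of_ne hx)]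
    exact Nat.lt_succ_of_le (dist_le _)
  · constructor
    · intro hxy
      refine ⟨hxy.ne, ?_⟩
      by_cases hy : y ∈ (p x).support
      · exact Or.inl (hG.isAcyclic.eq_snd_of_adj_start (hp x) hxy hy).symm
      · have hcons : ((p x).cons hxy.symm).IsPath := (hp x).cons hy
        rw [(hG.existsUnique_path y r).unique (hp y) hcons]
        exact Or.inr (Walk.snd_cons _ _)
    · have hpar : ∀ x y, x ≠ y → (p x).snd = y → G.Adj x y := by
        rintro x _ hxy rfl
        refine hadj x fun hx => hxy ?_
        rw [hx, hroot]
      rintro ⟨hxy, h | h⟩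
      exacts [hpar x y hxy h, (hpar y x hxy.symm h).symm]

namespace IsParentMap

lemma par_ne (h : IsParentMap G r par) (hx : x ≠ r) : par x ≠ x := fun hpar => by
  obtain ⟨d, hd⟩ := h.exists_depth
  exact (hpar ▸ hd x hx).false

lemma par_par_ne (h : IsParentMap G r par) (hx : x ≠ r) : par (par x) ≠ x := fun hpar => by
  obtain ⟨d, hd⟩ := h.exists_depth
  have hpr : par x ≠ r := fun hpr => hx (by rw [← hpar, hpr, h.par_root])
  exact (hpar ▸ hd _ hpr).asymm (hd x hx)

lemma adj_par (h : IsParentMap G r par) (hx : x ≠ r) : G.Adj x (par x) :=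
  (h.adj_iff _ _).2 ⟨(h.par_ne hx).symm, Or.inl rfl⟩

lemma parentEdge_injOn (h : IsParentMap G r par) :
    Set.InjOn (fun x => s(x, par x)) {x | x ≠ r} := by
  intro x hx y hy hxy
  have := h.par_par_ne hx
  grind

/-- A walk to the root has to leave the subtree hanging from its starting vertex `x`, which it can
only do through the edge from `x` to its parent. -/
lemma mk_par_mem_of_reachable (h : IsParentMap G r par) {F : Set (Sym2 V)} (hF : F ⊆ G.edgeSet)
    (hx : x ≠ r) (hr : (fromEdgeSet F).Reachable x r) : s(x, par x) ∈ F := by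
  obtain ⟨p⟩ := hr
  have hroot : ¬ ∃ k, par^[k] r = x := fun ⟨k, hk⟩ =>
    hx (by rw [← hk, Function.iterate_fixed h.par_root])
  obtain ⟨e, -, ⟨k, hk⟩, hout⟩ :=
    p.exists_boundary_dart {y | ∃ k, par^[k] y = x} ⟨0, rfl⟩ hroot
  have hadj := (fromEdgeSet_adj _).1 e.adj
  obtain hpar | hpar := ((h.adj_iff _ _).1 (hF hadj.1)).2
  · obtain _ | k := k
    · rw [← show e.fst = x from hk, hpar]
      exact hadj.1
    · exact absurd ⟨k, hpar ▸ hk⟩ hout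
  · exact absurd ⟨k + 1, by rw [Function.iterate_succ_apply, hpar, hk]⟩ hout

/-- Moving the root to a child `c` of the old root only changes the parents of these two
vertices. -/
lemma reroot [DecidableEq V] (h : IsParentMap G r par) (hc : par c = r) :
    IsParentMap G c (Function.update (Function.update par r c) c c) where
  par_root := Function.update_self ..
  exists_depth := by
    obtain ⟨d, hd⟩ := h.exists_depth
    refine ⟨fun x => if x = c then 0 else d x + 1, fun x hx => ?_⟩
    have := hd x
    grind [Function.update_apply]
  adj_iff x y := by
    have := h.par_root
    have := h.adj_iff x y
    grind [Function.update_apply]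

lemma update_leaf [DecidableEq V] (h : IsParentMap G r par) (hl : ∀ y, par y ≠ l) (hc : c ≠ l) :
    IsParentMap (G.deleteEdges {s(par l, l)} ⊔ fromEdgeSet {s(c, l)}) r
      (Function.update par l c) where
  par_root := by
    rw [Function.update_of_ne (fun hr => hl r (h.par_root.trans hr)), h.par_root]
  exists_depth := by
    obtain ⟨d, hd⟩ := h.exists_depth
    refine ⟨Function.update d l (d c + 1), fun x hx => ?_⟩
    have := hd x hx
    have := hl x
    grind [Function.update_apply]
  adj_iff x y := by
    have := hl x
    have := hl y
    simp only [sup_adj, deleteEdges_adj, fromEdgeSet_adj, Set.mem_singleton_iff, Sym2.eq_iff,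
      h.adj_iff]
    grind [Function.update_apply]

lemma isForest [Fintype V] [DecidableEq V] (h : IsParentMap G r par) :
    IsForest par (Finset.univ.erase r) where
  exists_depth := h.exists_depth.imp fun _ hd y hy => hd y (Finset.ne_of_mem_erase hy)
  mem_of_par_mem y hy := by
    refine Finset.mem_erase.2 ⟨?_, Finset.mem_univ y⟩
    rintro rfl
    exact Finset.ne_of_mem_erase hy h.par_root

end IsParentMap

/-- The isomorphism extends a forest isomorphism of the non-root vertices. -/
lemma nonempty_iso_of_isForestIso [Fintype V] [DecidableEq V] [Fintype W] [DecidableEq W]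
    {H : SimpleGraph W} {r' : W} {par' : W → W} {φ : V → W} (hG : IsParentMap G r par)
    (hH : IsParentMap H r' par')
    (hφ : IsForestIso par par' (Finset.univ.erase r) (Finset.univ.erase r') φ) :
    Nonempty (G ≃g H) := by
  have hmem : ∀ x, x ≠ r → φ x ≠ r' := fun x hx => by
    simpa using hφ.bijOn.mapsTo (x := x) (by simpa using hx)
  have hbij : Function.Bijective (Function.update φ r r') := by
    refine ⟨fun x y hxy => ?_, fun y => ?_⟩
    · have := hφ.bijOn.injOn.eq_iff (x := x) (y := y)
      grind [Function.update_apply]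
    · obtain rfl | hy := eq_or_ne y r'
      · exact ⟨r, Function.update_self ..⟩
      · obtain ⟨x, hx, rfl⟩ := hφ.bijOn.surjOn (by simpa using hy : y ∈ _)
        exact ⟨x, Function.update_of_ne (by simpa using hx) ..⟩
  have hpar : ∀ x, par' (Function.update φ r r' x) = Function.update φ r r' (par x) := by
    intro x
    have := hφ.par_apply x
    have := hφ.par_apply_notMem x
    have := hG.par_root
    have := hH.par_root
    grind [Function.update_apply]
  refine ⟨Equiv.ofBijective _ hbij, fun {x y} => ?_⟩
  rw [hH.adj_iff, hG.adj_iff]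
  simp only [Equiv.ofBijective_apply, hpar, hbij.injective.eq_iff, ne_eq]

end ParentMap

section SubtreeSum

open Polynomial

variable {V W R : Type*} [CommRing R] {a b : R} {G : SimpleGraph V} {H : SimpleGraph W}
  {F : Finset (Sym2 V)}

/-- The leaf edges of the edge set `F`, as in `leafCount`. -/
def IsLeafEdge (F : Finset (Sym2 V)) (e : Sym2 V) : Prop :=
  ∃ u ∈ e, ((fromEdgeSet (F : Set (Sym2 V))).neighborSet u).ncard = 1

open Classical in
/-- The product over `F` giving weight `b` to the leaf edges and weight `a` to the other edges. -/
noncomputable def edgeWeight (a b : R) (F : Finset (Sym2 V)) : R :=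
  ∏ e ∈ F, if IsLeafEdge F e then b else a

open Classical in
/-- The finset of subtrees of a finite graph. -/
noncomputable def subtrees [Fintype V] (G : SimpleGraph V) : Finset (Finset (Sym2 V)) :=
  {F | IsSubtree G F}

/-- The generating function of the subtrees by numbers of leaf edges and of other edges: the
Tutte-like polynomial in the variables `b = t` and `a = t (z + 1)`. -/
noncomputable def subtreeSum [Fintype V] (a b : R) (G : SimpleGraph V) : R :=
  ∑ F ∈ subtrees G, edgeWeight a b F

lemma edgeWeight_eq_pow_mul_pow :
    edgeWeight a b F = a ^ (F.card - leafCount F) * b ^ leafCount F := by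
  classical
  have hleaf : leafCount F = (F.filter (IsLeafEdge F)).card := by
    rw [leafCount, ← Set.ncard_coe_finset, Finset.coe_filter]
    rfl
  have hcard := Finset.card_filter_add_card_filter_not (s := F) (IsLeafEdge F)
  rw [edgeWeight, Finset.prod_ite, Finset.prod_const, Finset.prod_const, ← hleaf, mul_comm]
  congr 2
  omega

lemma leafCount_le_card : leafCount F ≤ F.card := by
  rw [← Set.ncard_coe_finset]
  exact Set.ncard_le_ncard (fun e he => he.1) F.finite_toSet

section Fintype

variable [Fintype V] [Fintype W]

lemma mem_subtrees : F ∈ subtrees G ↔ IsSubtree G F := by simp [subtrees]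

lemma map_subtreeSum {K : Type*} [CommRing K] (f : R →+* K) :
    f (subtreeSum a b G) = subtreeSum (f a) (f b) G := by
  simp [subtreeSum, edgeWeight_eq_pow_mul_pow]

lemma tutteLike_eq_sum_subtrees :
    tutteLike G = ∑ F ∈ subtrees G, C ((X + 1) ^ (F.card - leafCount F)) * X ^ F.card := by
  classical
  rw [tutteLike]
  refine Finset.sum_congr (Finset.ext fun F => ?_) fun _ _ => rfl
  rw [Finset.mem_filter, Finset.mem_powerset, mem_subtrees, and_iff_right_iff_imp]
  exact fun hF e he => mem_edgeFinset.2 (hF.1 he)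

lemma eval₂_tutteLike {K : Type*} [Field K] {a b : K} (hb : b ≠ 0) :
    eval₂ (eval₂RingHom (Int.castRingHom K) (a / b - 1)) b (tutteLike G) = subtreeSum a b G := by
  rw [tutteLike_eq_sum_subtrees, eval₂_finsetSum, subtreeSum]
  refine Finset.sum_congr rfl fun F _ => ?_
  rw [edgeWeight_eq_pow_mul_pow]
  nth_rw 2 [← Nat.sub_add_cancel (leafCount_le_card (F := F))]
  rw [eval₂_mul, eval₂_C, eval₂_X_pow, map_pow, map_add, map_one, coe_eval₂RingHom, eval₂_X,
    sub_add_cancel, pow_add, ← mul_assoc, ← mul_pow, div_mul_cancel₀ a hb]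

/-- The substitution `t = b`, `z = a / b - 1` requires passing to the fraction field. -/
lemma subtreeSum_eq_of_tutteLike_eq [IsDomain R] (hb : b ≠ 0) (h : tutteLike G = tutteLike H) :
    subtreeSum a b G = subtreeSum a b H := by
  apply FaithfulSMul.algebraMap_injective R (FractionRing R)
  have hb' : algebraMap R (FractionRing R) b ≠ 0 := by
    rwa [Ne, FaithfulSMul.algebraMap_eq_zero_iff]
  rw [map_subtreeSum, map_subtreeSum, ← eval₂_tutteLike hb', h, eval₂_tutteLike hb']

lemma subtreeSum_eq_add_deleteEdges [DecidableEq V] (e : Sym2 V) :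
    subtreeSum a b G =
      (∑ F ∈ subtrees G with e ∈ F, edgeWeight a b F) + subtreeSum a b (G.deleteEdges {e}) := by
  have hdelete : subtrees (G.deleteEdges {e}) = {F ∈ subtrees G | e ∉ F} := by
    ext F
    simp only [Finset.mem_filter, mem_subtrees, IsSubtree, edgeSet_deleteEdges,
      Set.subset_sdiff, Set.disjoint_singleton_right, Finset.mem_coe]
    tauto
  rw [subtreeSum, subtreeSum, hdelete, Finset.sum_filter_add_sum_filter_not]

end Fintype

variable [DecidableEq V] {r l x y : V} {par : V → V} {S : Finset V}

/-- The edges from the vertices of `S` to their parents. -/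
def parentEdges (par : V → V) (S : Finset V) : Finset (Sym2 V) := S.image fun x => s(x, par x)

namespace IsParentMap

lemma mk_par_mem_parentEdges (h : IsParentMap G r par) (hS : r ∉ S) (hx : x ≠ r) :
    s(x, par x) ∈ parentEdges par S ↔ x ∈ S := by
  rw [parentEdges, Finset.mem_image]
  refine ⟨fun ⟨y, hy, hyx⟩ => ?_, fun hxS => ⟨x, hxS, rfl⟩⟩
  rwa [← h.parentEdge_injOn (ne_of_mem_of_not_mem hy hS) hx hyx]

lemma adj_parentEdges (h : IsParentMap G r par) (hS : r ∉ S) :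
    (fromEdgeSet (parentEdges par S : Set (Sym2 V))).Adj x y ↔
      (x ∈ S ∧ par x = y) ∨ (y ∈ S ∧ par y = x) := by
  have hne : ∀ z ∈ S, par z ≠ z := fun z hz => h.par_ne (ne_of_mem_of_not_mem hz hS)
  simp only [fromEdgeSet_adj, parentEdges, Finset.coe_image, Set.mem_image, Finset.mem_coe]
  grind

section closedSubsets

variable [Fintype V]

lemma root_notMem_of_mem_closedSubsets
    (hS : S ∈ closedSubsets par (Finset.univ.erase r)) : r ∉ S := fun hr =>
  Finset.notMem_erase r _ ((mem_closedSubsets.1 hS).1 hr)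

lemma par_eq_root_or_mem (hS : S ∈ closedSubsets par (Finset.univ.erase r)) (hx : x ∈ S) :
    par x = r ∨ par x ∈ S := by
  refine or_iff_not_imp_left.2 fun hpar => (mem_closedSubsets.1 hS).2 x hx ?_
  exact Finset.mem_erase.2 ⟨hpar, Finset.mem_univ _⟩

lemma isSubtree_parentEdges (h : IsParentMap G r par)
    (hS : S ∈ closedSubsets par (Finset.univ.erase r)) : IsSubtree G (parentEdges par S) := by
  have hrS := root_notMem_of_mem_closedSubsets hS
  obtain ⟨d, hd⟩ := h.exists_depth
  have hreach : ∀ x ∈ S, (fromEdgeSet (parentEdges par S : Set (Sym2 V))).Reachable x r := by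
    intro x hx
    induction hn : d x using Nat.strong_induction_on generalizing x with
    | _ n ih =>
      have hadj := (h.adj_parentEdges hrS).2 (Or.inl ⟨hx, rfl⟩)
      obtain hpar | hpar := par_eq_root_or_mem hS hx
      · exact hpar ▸ hadj.reachable
      · have hlt := hn ▸ hd x (ne_of_mem_of_not_mem hx hrS)
        exact hadj.reachable.trans (ih _ hlt _ hpar rfl)
  have hsupport : ∀ x ∈ (fromEdgeSet (parentEdges par S : Set (Sym2 V))).support,
      (fromEdgeSet (parentEdges par S : Set (Sym2 V))).Reachable x r := by
    rintro x ⟨y, hxy⟩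
    obtain ⟨hx, -⟩ | ⟨hy, -⟩ := (h.adj_parentEdges hrS).1 hxy
    exacts [hreach x hx, hxy.reachable.trans (hreach y hy)]
  refine ⟨fun e he => ?_, fun u v hu hv => (hsupport u hu).trans (hsupport v hv).symm⟩
  obtain ⟨x, hx, rfl⟩ := Finset.mem_image.1 he
  exact h.adj_par (ne_of_mem_of_not_mem hx hrS)

lemma exists_eq_parentEdges (h : IsParentMap G r par) (hF : IsSubtree G F)
    (hl : s(l, r) ∈ F) (hlr : l ≠ r) :
    ∃ S ∈ closedSubsets par (Finset.univ.erase r), parentEdges par S = F := by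
  have hsupport : ∀ {x y}, s(x, y) ∈ F → x ≠ y →
      x ∈ (fromEdgeSet (F : Set (Sym2 V))).support :=
    fun hxy hne => ⟨_, (fromEdgeSet_adj _).2 ⟨hxy, hne⟩⟩
  have hr := hsupport (Sym2.eq_swap ▸ hl) hlr.symm
  refine ⟨{x ∈ Finset.univ.erase r | s(x, par x) ∈ F},
    mem_closedSubsets.2 ⟨Finset.filter_subset _ _, fun x hx hpar => ?_⟩, ?_⟩
  · simp only [Finset.mem_filter, Finset.mem_erase, Finset.mem_univ, and_true] at hx hpar ⊢
    refine ⟨hpar, h.mk_par_mem_of_reachable hF.1 hpar (hF.2 _ _ ?_ hr)⟩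
    exact hsupport (Sym2.eq_swap ▸ hx.2) (h.par_ne hx.1)
  · ext e
    induction e with | _ x y
    have hadj := h.adj_iff x y
    have hmem : s(x, y) ∈ F → G.Adj x y := fun he => hF.1 he
    have := h.par_root
    simp only [parentEdges, Finset.mem_image, Finset.mem_filter, Finset.mem_erase]
    grind

end closedSubsets

section Pendant

variable [Fintype V]

/-- The leaf `l` below the root guarantees that the root is not the end of any other leaf edge. -/
lemma isLeafEdge_parentEdges (h : IsParentMap G r par)
    (hS : S ∈ closedSubsets par (Finset.univ.erase r)) (hlS : l ∈ S) (hlr : par l = r)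
    (hleaf : ∀ y, par y ≠ l) (hx : x ∈ S) :
    IsLeafEdge (parentEdges par S) s(x, par x) ↔ x ∉ S.image par := by
  have hrS := root_notMem_of_mem_closedSubsets hS
  have hpar : ∀ x ∈ S, par x = r ∨ par x ∈ S := fun x hx => par_eq_root_or_mem hS hx
  have hpp : ∀ x ∈ S, par (par x) ≠ x := fun x hx => h.par_par_ne (ne_of_mem_of_not_mem hx hrS)
  simp only [IsLeafEdge, Set.ncard_eq_one, Set.eq_singleton_iff_unique_mem, mem_neighborSet,
    h.adj_parentEdges hrS, Finset.mem_image, Sym2.mem_iff]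
  constructor
  · grind
  · intro hno
    exact ⟨x, by grind⟩

lemma edgeWeight_parentEdges (h : IsParentMap G r par)
    (hS : S ∈ closedSubsets par (Finset.univ.erase r)) (hlS : l ∈ S) (hlr : par l = r)
    (hleaf : ∀ y, par y ≠ l) :
    edgeWeight a b (parentEdges par S) = closedWeight a b par S := by
  have hinj : Set.InjOn (fun x => s(x, par x)) S := h.parentEdge_injOn.mono fun x hx =>
    ne_of_mem_of_not_mem hx (root_notMem_of_mem_closedSubsets hS)
  rw [edgeWeight, closedWeight]
  conv_lhs => enter [1]; rw [parentEdges]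
  rw [Finset.prod_image hinj]
  refine Finset.prod_congr rfl fun x hx => ?_
  simp only [h.isLeafEdge_parentEdges hS hlS hlr hleaf hx, ite_not]

lemma sum_edgeWeight_of_leaf (h : IsParentMap G r par) (hlr : par l = r) (hleaf : ∀ y, par y ≠ l) :
    ∑ F ∈ subtrees G with s(l, r) ∈ F, edgeWeight a b F =
      b * closedSum a b par ((Finset.univ.erase r).erase l) := by
  have hne : l ≠ r := fun hl => hleaf r (by rw [h.par_root, hl])
  rw [← sum_closedWeight_of_leaf (by simpa using hne) (by simp [hlr]) fun y _ => hleaf y]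
  have hmem : ∀ S ∈ closedSubsets par (Finset.univ.erase r),
      (s(l, r) ∈ parentEdges par S ↔ l ∈ S) := fun S hS => by
    rw [← h.mk_par_mem_parentEdges (root_notMem_of_mem_closedSubsets hS) hne, hlr]
  symm
  refine Finset.sum_nbij (parentEdges par) (fun S hS => ?_) ?_ ?_ fun S hS => ?_
  · obtain ⟨hS, hlS⟩ := Finset.mem_filter.1 hS
    exact Finset.mem_filter.2
      ⟨mem_subtrees.2 (h.isSubtree_parentEdges hS), (hmem S hS).2 hlS⟩
  · intro S hS S' hS' heq
    have hr := root_notMem_of_mem_closedSubsets (Finset.mem_filter.1 hS).1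
    have hr' := root_notMem_of_mem_closedSubsets (Finset.mem_filter.1 hS').1
    ext x
    obtain rfl | hx := eq_or_ne x r
    · simp only [hr, hr']
    · rw [← h.mk_par_mem_parentEdges hr hx, heq, h.mk_par_mem_parentEdges hr' hx]
  · intro F hF
    obtain ⟨hF, hlF⟩ := Finset.mem_filter.1 hF
    obtain ⟨S, hS, rfl⟩ := h.exists_eq_parentEdges (mem_subtrees.1 hF) hlF hne
    exact ⟨S, Finset.mem_filter.2 ⟨hS, (hmem S hS).1 hlF⟩, rfl⟩
  · obtain ⟨hS, hlS⟩ := Finset.mem_filter.1 hS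
    exact (h.edgeWeight_parentEdges hS hlS hlr hleaf).symm

end Pendant
end IsParentMap
end SubtreeSum

section Grafting

variable {V W R : Type*} {T T' : SimpleGraph V} {v m l : V} {par : V → V}

/-- With `T` rooted at `v`, the leaf `l` hangs from a vertex `m` without other children, which is
itself a child of `v`, and `T'` is obtained from `T` by moving `l` from `m` to `v`. -/
structure IsGraftingAt [DecidableEq V] (T T' : SimpleGraph V) (v m l : V) (par : V → V) :
    Prop where
  isParentMap : IsParentMap T v par
  isParentMap_update : IsParentMap T' v (Function.update par l v)
  par_leaf : par l = m
  par_mid : par m = v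
  eq_leaf : ∀ x, par x = m → x = l
  par_ne_leaf : ∀ x, par x ≠ l

lemma exists_isGraftingAt [DecidableEq V] (hT : T.IsTree) (h : Grafts T T') :
    ∃ v m l par, IsGraftingAt T T' v m l par := by
  obtain ⟨m, l, v, hml, hl, hm, hmv, hvl, rfl⟩ := h
  obtain ⟨par, hpar⟩ := exists_isParentMap hT v
  have hneighbor_l : ∀ x, T.Adj x l → x = m := fun x hx =>
    Set.ncard_le_one (Set.finite_of_ncard_pos (by omega)) |>.1 hl.le x hx.symm m hml.symm
  have hneighbor_m : ∀ x, T.Adj x m → x = l ∨ x = v := by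
    obtain ⟨y, z, -, hyz⟩ := Set.ncard_eq_two.1 hm
    have hmem : ∀ x, T.Adj m x ↔ x = y ∨ x = z := fun x => by
      rw [← mem_neighborSet, hyz, Set.mem_insert_iff, Set.mem_singleton_iff]
    intro x hx
    have := (hmem x).1 hx.symm
    have := (hmem l).1 hml
    have := (hmem v).1 hmv
    grind
  have hroot := hpar.par_root
  have hadj_ml := (hpar.adj_iff m l).1 hml
  have hadj_mv := (hpar.adj_iff m v).1 hmv
  have hpar_leaf : par l = m := by grind
  have hpar_ne_leaf : ∀ x, par x ≠ l := fun x hx => by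
    have := hneighbor_l x
    have := hpar.adj_iff x l
    grind
  refine ⟨v, m, l, par, hpar, ?_, hpar_leaf, by grind, fun x hx => ?_, hpar_ne_leaf⟩
  · simpa only [hpar_leaf] using hpar.update_leaf hpar_ne_leaf hvl
  · have := hneighbor_m x
    have := hpar.adj_iff x m
    grind

/-- The vertices outside the path `v`, `m`, `l`: they keep their parents and their children when the
leaf `l` is grafted from `m` to `v`. -/
def offPath [Fintype V] [DecidableEq V] (v m l : V) : Finset V :=
  ((Finset.univ.erase v).erase m).erase l

namespace IsGraftingAt

variable [DecidableEq V]

lemma mid_ne_root (h : IsGraftingAt T T' v m l par) : m ≠ v := by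
  have := h.isParentMap.par_root
  have := h.par_leaf
  have := h.eq_leaf v
  have := h.par_ne_leaf v
  grind

lemma leaf_ne_root (h : IsGraftingAt T T' v m l par) : l ≠ v := fun hlv =>
  h.par_ne_leaf v (by rw [h.isParentMap.par_root, hlv])

lemma leaf_ne_mid (h : IsGraftingAt T T' v m l par) : l ≠ m := fun hlm =>
  h.par_ne_leaf l (h.par_leaf.trans hlm.symm)

lemma deleteEdges_eq (h : IsGraftingAt T T' v m l par) :
    T'.deleteEdges {s(l, v)} = T.deleteEdges {s(l, m)} := by
  ext x y
  have := h.par_ne_leaf x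
  have := h.par_ne_leaf y
  have := h.par_leaf
  simp only [deleteEdges_adj, Set.mem_singleton_iff, Sym2.eq_iff, h.isParentMap.adj_iff,
    h.isParentMap_update.adj_iff]
  grind [Function.update_apply]

variable [Fintype V] [CommRing R] {a b : R}

lemma closedSum_update_erase_leaf (h : IsGraftingAt T T' v m l par) :
    closedSum a b (Function.update par l v) ((Finset.univ.erase v).erase l) =
      (1 + b) * closedSum a b par (offPath v m l) := by
  have hmv := h.mid_ne_root
  have hlm := h.leaf_ne_mid
  have := h.par_mid
  have := h.eq_leaf
  have hunion : (Finset.univ.erase v).erase l = {m} ∪ offPath v m l := by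
    ext x
    grind [offPath]
  have hcongr : closedSum a b (Function.update par l v) (offPath v m l) =
      closedSum a b par (offPath v m l) := closedSum_congr fun x hx =>
    Function.update_of_ne (Finset.ne_of_mem_erase hx) ..
  rw [hunion, closedSum_union, closedSum_singleton, hcongr]
  all_goals grind [Finset.disjoint_singleton_left, offPath, Function.update_apply]

lemma closedSum_update (h : IsGraftingAt T T' v m l par) :
    closedSum a b (Function.update par l v) (Finset.univ.erase v) =
      (1 + b) ^ 2 * closedSum a b par (offPath v m l) := by
  have hlv := h.leaf_ne_root
  have hroot := h.isParentMap.par_root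
  have hleaf := h.par_ne_leaf
  have hunion : Finset.univ.erase v = {l} ∪ (Finset.univ.erase v).erase l := by
    ext x
    grind
  rw [hunion, closedSum_union, closedSum_singleton, h.closedSum_update_erase_leaf]
  · ring
  all_goals grind [Finset.disjoint_singleton_left, Function.update_apply]

/-- Rooted at `m`, the tree `T` without its leaf `l` consists of the child `v` of `m` and of the
vertices in `offPath v m l`, which hang from `v`. -/
lemma closedSum_reroot (h : IsGraftingAt T T' v m l par) :
    closedSum a b (Function.update (Function.update par v m) m m) ((Finset.univ.erase m).erase l) =
      1 + b + a * (closedSum a b par (offPath v m l) - 1) := by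
  have hmv := h.mid_ne_root
  have hlv := h.leaf_ne_root
  have := h.eq_leaf
  have := h.par_ne_leaf
  have hinsert : (Finset.univ.erase m).erase l = insert v (offPath v m l) := by
    ext x
    grind [offPath]
  have hcongr : closedSum a b (Function.update (Function.update par v m) m m) (offPath v m l) =
      closedSum a b par (offPath v m l) :=
    closedSum_congr fun x hx => by grind [offPath, Function.update_apply]
  obtain ⟨d, hd⟩ := (h.isParentMap.reroot h.par_mid).exists_depth
  rw [hinsert, closedSum_insert_root (d := d), hcongr]
  · exact fun y hy => hd y (by grind [offPath])
  all_goals grind [offPath, Function.update_apply]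

lemma subtreeSum_eq_add (h : IsGraftingAt T T' v m l par) :
    subtreeSum a b T' =
      subtreeSum a b T + b * (1 + b - a) * (closedSum a b par (offPath v m l) - 1) := by
  have hpar_ne := h.par_ne_leaf
  have hlm := h.leaf_ne_mid
  have hlv := h.leaf_ne_root
  rw [subtreeSum_eq_add_deleteEdges s(l, v), subtreeSum_eq_add_deleteEdges (G := T) s(l, m),
    h.deleteEdges_eq, h.isParentMap_update.sum_edgeWeight_of_leaf (Function.update_self ..),
    (h.isParentMap.reroot h.par_mid).sum_edgeWeight_of_leaf,
    h.closedSum_update_erase_leaf, h.closedSum_reroot]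
  · ring
  all_goals grind [Function.update_apply, h.par_leaf]

end IsGraftingAt
end Grafting

end TutteLike

open TutteLike Polynomial in
theorem stmt_14_general {V W : Type*} [Fintype V] [Fintype W] {S S' : SimpleGraph V}
    {T T' : SimpleGraph W} (hS : S.IsTree) (hT : T.IsTree) (hSS' : Grafts S S')
    (hTT' : Grafts T T') (hparent : tutteLike S = tutteLike T)
    (hgraft : tutteLike S' = tutteLike T') : Nonempty (S' ≃g T') := by
  classical
  let a : ℤ[X][X] := X - C X
  let b : ℤ[X][X] := X - 1
  have hb : b ≠ 0 := X_sub_C_ne_zero 1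
  have hcoeff : b * (1 + b - a) ≠ 0 := by
    refine mul_ne_zero hb ?_
    simp only [a, b, add_sub_cancel, sub_sub_cancel]
    exact C_ne_zero.2 X_ne_zero
  obtain ⟨v, m, l, par, hpar⟩ := exists_isGraftingAt hS hSS'
  obtain ⟨v', m', l', par', hpar'⟩ := exists_isGraftingAt hT hTT'
  have hrest : closedSum a b par (offPath v m l) =
      closedSum a b par' (offPath v' m' l') := by
    have hsum := subtreeSum_eq_of_tutteLike_eq (a := a) hb hgraft
    rw [hpar.subtreeSum_eq_add, hpar'.subtreeSum_eq_add,
      subtreeSum_eq_of_tutteLike_eq hb hparent] at hsum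
    exact sub_left_injective (mul_left_cancel₀ hcoeff (add_left_cancel hsum))
  have hclosed : closedSum a b (Function.update par l v) (Finset.univ.erase v) =
      closedSum a b (Function.update par' l' v') (Finset.univ.erase v') := by
    rw [hpar.closedSum_update, hpar'.closedSum_update, hrest]
  have := hT.connected.nonempty
  obtain ⟨φ, hφ⟩ := hpar.isParentMap_update.isForest.exists_isForestIso prime_X
    hpar'.isParentMap_update.isForest hclosed
  exact nonempty_iso_of_isForestIso hpar.isParentMap_update hpar'.isParentMap_update hφ

/-- If `T1` and `T2` are each obtained from a finite tree `T` by a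
single grafting operation and are not isomorphic as graphs, then their Tutte-like
polynomials are distinct: `f(T1;t,z) ≠ f(T2;t,z)`. -/
theorem stmt_14 {V : Type*} [Fintype V] (T T1 T2 : SimpleGraph V) (hT : T.IsTree)
    (h1 : Grafts T T1) (h2 : Grafts T T2) (hniso : ¬ Nonempty (T1 ≃g T2)) :
    tutteLike T1 ≠ tutteLike T2 :=
  fun heq => hniso (stmt_14_general hT hT h1 h2 rfl heq)
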